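/- arXiv:2510.23309 — 2 statements merged into one kernel-verified Lean document; each statement's English description precedes it below -/
import Mathlib

section
/- Let 1 < α < 2, A a bounded linear operator on a Banach space E, S_α(t) = E_α(t^α A), and f : [0,∞) → E continuous. Then for t ≥ 0, ∫_0^t J_t S_α(t-τ) ^{RL}D_τ^{2-α} f(τ) dτ = ∫_0^t (t-τ)^{α-1} E_{α,α}((t-τ)^α A) f(τ) dτ, where J_t denotes the first-order integral in t and ^{RL}D^{2-α} the Riemann–Liouville derivative of order 2-α. -/
open Real MeasureTheory intervalIntegral

/-- Operator-valued two-parameter Mittag-Leffler function. -/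
noncomputable def opML {E : Type*} [NormedAddCommGroup E] [NormedSpace ℝ E]
    (α β : ℝ) (A : E →L[ℝ] E) (t : ℝ) : E →L[ℝ] E :=
  ∑' n : ℕ, (t ^ ((n : ℝ) * α) / Real.Gamma (β + n * α)) • A ^ n

/-- Vector-valued Riemann–Liouville fractional integral. -/
noncomputable def jFrac {E : Type*} [NormedAddCommGroup E] [NormedSpace ℝ E]
    (γ : ℝ) (f : ℝ → E) (t : ℝ) : E :=
  (1 / Real.Gamma γ) • ∫ τ in (0:ℝ)..t, (t - τ) ^ (γ - 1) • f τ

lemma integral_rpow_mul_sub_rpow {a b c : ℝ} (ha : 0 < a) (hb : 0 < b) (hc : 0 < c) :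
    ∫ x in (0:ℝ)..c, x ^ (a - 1) * (c - x) ^ (b - 1)
      = c ^ (a + b - 1) * ProbabilityTheory.beta a b := by
  have h := Complex.betaIntegral_scaled a b hc
  rw [Complex.betaIntegral_eq_Gamma_mul_div _ _ (by simpa) (by simpa)] at h
  have h2 : ∫ x in (0:ℝ)..c, (x : ℂ) ^ ((a : ℂ) - 1) * ((c : ℂ) - x) ^ ((b : ℂ) - 1)
      = ∫ x in (0:ℝ)..c, ((x ^ (a - 1) * (c - x) ^ (b - 1) : ℝ) : ℂ) := by
    refine integral_congr fun x hx => ?_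
    rw [Set.uIcc_of_le hc.le] at hx
    have h1 : 0 ≤ c - x := by linarith [hx.2]
    push_cast [Complex.ofReal_cpow hx.1, Complex.ofReal_cpow h1]
    rfl
  rw [h2, intervalIntegral.integral_ofReal] at h
  apply Complex.ofReal_injective
  rw [h, ProbabilityTheory.beta]
  push_cast [Complex.ofReal_cpow hc.le, ← Complex.Gamma_ofReal]
  rfl

lemma integral_sub_rpow_mul_sub_rpow {a b s t : ℝ} (ha : 0 < a) (hb : 0 < b) (hst : s < t) :
    ∫ τ in s..t, (t - τ) ^ (a - 1) * (τ - s) ^ (b - 1)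
      = (t - s) ^ (a + b - 1) * ProbabilityTheory.beta a b := by
  have h := intervalIntegral.integral_comp_sub_left
    (fun x : ℝ => x ^ (a - 1) * (t - s - x) ^ (b - 1)) t (a := s) (b := t)
  rw [sub_self, integral_rpow_mul_sub_rpow ha hb (sub_pos.2 hst)] at h
  rw [← h]
  refine integral_congr fun x _ => ?_
  congr 2
  ring

lemma integrableOn_sub_rpow_mul_sub_rpow {a b s t : ℝ} (ha : 0 < a) (hb : 0 < b) (hst : s < t) :
    IntegrableOn (fun τ : ℝ => (t - τ) ^ (a - 1) * (τ - s) ^ (b - 1)) (Set.Ioo s t) := by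
  rw [← intervalIntegrable_iff_integrableOn_Ioo_of_le hst.le]
  refine intervalIntegrable_of_integral_ne_zero ?_
  rw [integral_sub_rpow_mul_sub_rpow ha hb hst]
  exact (mul_pos (rpow_pos_of_pos (sub_pos.2 hst) _)
    (ProbabilityTheory.beta_pos ha hb)).ne'

section

variable {E : Type*} [NormedAddCommGroup E] [NormedSpace ℝ E]

lemma intervalIntegrable_sub_rpow_smul {c t : ℝ} (hc : 0 < c) {g : ℝ → E} (hg : Continuous g) :
    IntervalIntegrable (fun s => (t - s) ^ (c - 1) • g s) volume 0 t := by
  have h := (intervalIntegrable_rpow' (a := 0) (b := t) (by linarith : -1 < c - 1)).comp_sub_left t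
  rw [sub_zero, sub_self] at h
  exact h.symm.smul_continuousOn hg.continuousOn

lemma integrable_triangle {a b t : ℝ} (ha : 0 < a) (hb : 0 < b) {g : ℝ → E}
    (hg : Continuous g) :
    Integrable (fun p : ℝ × ℝ => (Set.Ioi p.1).indicator
        (fun τ => ((t - τ) ^ (a - 1) * (τ - p.1) ^ (b - 1)) • g p.1) p.2)
      ((volume.restrict (Set.Ioo 0 t)).prod (volume.restrict (Set.Ioo 0 t))) := by
  have hmeas : AEStronglyMeasurable (fun p : ℝ × ℝ => (Set.Ioi p.1).indicator
        (fun τ => ((t - τ) ^ (a - 1) * (τ - p.1) ^ (b - 1)) • g p.1) p.2)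
      ((volume.restrict (Set.Ioo 0 t)).prod (volume.restrict (Set.Ioo 0 t))) := by
    have hs : MeasurableSet {p : ℝ × ℝ | p.1 < p.2} := measurableSet_lt measurable_fst measurable_snd
    have h1 : AEStronglyMeasurable (fun p : ℝ × ℝ =>
        ((t - p.2) ^ (a - 1) * (p.2 - p.1) ^ (b - 1)) • g p.1)
        ((volume.restrict (Set.Ioo 0 t)).prod (volume.restrict (Set.Ioo 0 t))) :=
      AEStronglyMeasurable.smul (by fun_prop) (hg.comp continuous_fst).aestronglyMeasurable
    exact h1.indicator hs
  have hinter : ∀ s ∈ Set.Ioo 0 t, Set.Ioi s ∩ Set.Ioo 0 t = Set.Ioo s t := by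
    intro s hs
    ext x
    simp only [Set.mem_inter_iff, Set.mem_Ioi, Set.mem_Ioo] at *
    constructor
    · rintro ⟨h1, _, h2⟩; exact ⟨h1, h2⟩
    · rintro ⟨h1, h2⟩; exact ⟨h1, hs.1.trans h1, h2⟩
  rw [integrable_prod_iff hmeas]
  constructor
  · refine ae_restrict_of_forall_mem measurableSet_Ioo fun s hs => ?_
    change Integrable ((Set.Ioi s).indicator
      fun τ => ((t - τ) ^ (a - 1) * (τ - s) ^ (b - 1)) • g s) _
    rw [integrable_indicator_iff measurableSet_Ioi, IntegrableOn,
      Measure.restrict_restrict measurableSet_Ioi, hinter s hs]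
    exact (integrableOn_sub_rpow_mul_sub_rpow ha hb hs.2).smul_const _
  · rcases le_or_gt t 0 with ht | ht
    · simp [Set.Ioo_eq_empty (not_lt.2 ht)]
    have hI := (intervalIntegrable_sub_rpow_smul (t := t) (c := a + b) (by positivity)
      (hg.norm.const_smul (ProbabilityTheory.beta a b)))
    rw [intervalIntegrable_iff_integrableOn_Ioo_of_le ht.le] at hI
    refine hI.congr (ae_restrict_of_forall_mem measurableSet_Ioo fun s hs => ?_)
    simp only [norm_indicator_eq_indicator_norm]
    rw [MeasureTheory.integral_indicator measurableSet_Ioi,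
      Measure.restrict_restrict measurableSet_Ioi, hinter s hs]
    have : ∀ τ ∈ Set.Ioo s t, ‖((t - τ) ^ (a - 1) * (τ - s) ^ (b - 1)) • g s‖
        = ((t - τ) ^ (a - 1) * (τ - s) ^ (b - 1)) * ‖g s‖ := by
      intro τ hτ
      rw [norm_smul, Real.norm_of_nonneg (mul_nonneg (rpow_nonneg (by linarith [hτ.2]) _)
        (rpow_nonneg (by linarith [hτ.1]) _))]
    rw [setIntegral_congr_fun measurableSet_Ioo this, MeasureTheory.integral_mul_const,
      ← integral_Ioc_eq_integral_Ioo, ← intervalIntegral.integral_of_le hs.2.le,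
      integral_sub_rpow_mul_sub_rpow ha hb hs.2]
    simp only [smul_eq_mul, Pi.smul_apply]
    ring

lemma jFrac_congr {γ t : ℝ} (ht : 0 ≤ t) {f g : ℝ → E} (h : ∀ s ∈ Set.Icc 0 t, f s = g s) :
    jFrac γ f t = jFrac γ g t := by
  unfold jFrac
  congr 1
  refine integral_congr fun s hs => ?_
  rw [Set.uIcc_of_le ht] at hs
  simp only [h s hs]

/-- Semigroup law of the Riemann–Liouville integrals. -/
lemma jFrac_jFrac [CompleteSpace E] {a b t : ℝ} (ha : 0 < a) (hb : 0 < b) (ht : 0 ≤ t) {g : ℝ → E}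
    (hg : Continuous g) : jFrac a (jFrac b g) t = jFrac (a + b) g t := by
  have hswap := integral_integral_swap (f := fun s τ => (Set.Ioi s).indicator
    (fun τ => ((t - τ) ^ (a - 1) * (τ - s) ^ (b - 1)) • g s) τ)
    (integrable_triangle (t := t) ha hb hg)
  have hL : ∫ s in Set.Ioo 0 t, ∫ τ in Set.Ioo 0 t, (Set.Ioi s).indicator
        (fun τ => ((t - τ) ^ (a - 1) * (τ - s) ^ (b - 1)) • g s) τ
      = ProbabilityTheory.beta a b • ∫ s in (0:ℝ)..t, (t - s) ^ (a + b - 1) • g s := by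
    rw [intervalIntegral.integral_of_le ht, integral_Ioc_eq_integral_Ioo,
      ← MeasureTheory.integral_smul]
    refine setIntegral_congr_fun measurableSet_Ioo fun s hs => ?_
    have hinter : Set.Ioo 0 t ∩ Set.Ioi s = Set.Ioo s t := by
      rw [Set.Ioo_inter_Ioi, sup_eq_right.2 hs.1.le]
    rw [setIntegral_indicator measurableSet_Ioi, hinter, _root_.integral_smul_const,
      ← integral_Ioc_eq_integral_Ioo, ← intervalIntegral.integral_of_le hs.2.le,
      integral_sub_rpow_mul_sub_rpow ha hb hs.2, smul_smul, mul_comm]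
  have hR : ∫ τ in Set.Ioo 0 t, ∫ s in Set.Ioo 0 t, (Set.Ioi s).indicator
        (fun τ => ((t - τ) ^ (a - 1) * (τ - s) ^ (b - 1)) • g s) τ
      = ∫ τ in (0:ℝ)..t, (t - τ) ^ (a - 1) • ∫ s in (0:ℝ)..τ, (τ - s) ^ (b - 1) • g s := by
    rw [intervalIntegral.integral_of_le ht, integral_Ioc_eq_integral_Ioo]
    refine setIntegral_congr_fun measurableSet_Ioo fun τ hτ => ?_
    have h1 : ∀ s, (Set.Ioi s).indicator
        (fun τ => ((t - τ) ^ (a - 1) * (τ - s) ^ (b - 1)) • g s) τ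
        = (Set.Iio τ).indicator (fun s => (t - τ) ^ (a - 1) • (τ - s) ^ (b - 1) • g s) s := by
      intro s
      simp [Set.indicator_apply, smul_smul]
    have hinter : Set.Ioo 0 t ∩ Set.Iio τ = Set.Ioo 0 τ := by
      rw [Set.Ioo_inter_Iio, inf_eq_right.2 hτ.2.le]
    simp only [h1]
    rw [setIntegral_indicator measurableSet_Iio, hinter, MeasureTheory.integral_smul,
      intervalIntegral.integral_of_le hτ.1.le, integral_Ioc_eq_integral_Ioo]
  rw [hL, hR] at hswap
  have h2 : ∀ τ : ℝ, (t - τ) ^ (a - 1) • jFrac b g τ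
      = (1 / Real.Gamma b) • (t - τ) ^ (a - 1) • ∫ s in (0:ℝ)..τ, (τ - s) ^ (b - 1) • g s :=
    fun τ => by rw [jFrac, smul_comm]
  rw [jFrac]
  simp only [h2]
  rw [intervalIntegral.integral_smul, ← hswap, smul_smul, smul_smul, jFrac]
  congr 1
  have := (Real.Gamma_pos_of_pos ha).ne'
  have := (Real.Gamma_pos_of_pos hb).ne'
  rw [ProbabilityTheory.beta]
  field_simp

/-- The Riemann–Liouville integral of a continuous function extends from `[0, ∞)` to a continuous
function on the line. -/
lemma exists_continuous_eq_jFrac [CompleteSpace E] {b : ℝ} (hb : 0 < b) {g : ℝ → E}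
    (hg : Continuous g) : ∃ G : ℝ → E, Continuous G ∧ ∀ t, 0 ≤ t → jFrac b g t = G t := by
  have hint : IntervalIntegrable (fun v : ℝ => (1 - v) ^ (b - 1)) volume 0 1 := by
    have h := (intervalIntegrable_rpow' (a := 0) (b := 1)
      (by linarith : -1 < b - 1)).comp_sub_left 1
    rw [sub_zero, sub_self] at h
    exact h.symm
  refine ⟨fun t => (1 / Real.Gamma b) • t ^ b • ∫ v in (0:ℝ)..1, (1 - v) ^ (b - 1) • g (t * v),
    ?_, fun t ht => ?_⟩
  · refine ((continuous_id.rpow_const fun _ => Or.inr hb.le).smul ?_).const_smul _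
    refine continuous_iff_continuousAt.2 fun t₀ => ?_
    obtain ⟨C, hC⟩ := (isCompact_Icc (a := -(|t₀| + 1)) (b := |t₀| + 1)).exists_bound_of_continuousOn
      hg.continuousOn
    refine continuousAt_of_dominated_interval (bound := fun v => (1 - v) ^ (b - 1) * C)
      (Filter.Eventually.of_forall fun t => ?_) ?_ (hint.mul_const C)
      (Filter.Eventually.of_forall fun v _ => ?_)
    · exact AEStronglyMeasurable.smul
        ((measurable_const.sub measurable_id).pow_const _).aestronglyMeasurable
        (hg.comp (continuous_const.mul continuous_id)).aestronglyMeasurable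
    · filter_upwards [Metric.ball_mem_nhds t₀ one_pos] with t ht
      refine Filter.Eventually.of_forall fun v hv => ?_
      rw [Set.uIoc_of_le zero_le_one] at hv
      rw [norm_smul, Real.norm_of_nonneg (rpow_nonneg (by linarith [hv.2]) _)]
      refine mul_le_mul_of_nonneg_left (hC _ (abs_le.1 ?_)) (rpow_nonneg (by linarith [hv.2]) _)
      rw [Metric.mem_ball, Real.dist_eq] at ht
      have h1 := abs_sub_abs_le_abs_sub t t₀
      rw [abs_mul, abs_of_pos hv.1]
      nlinarith [abs_nonneg t, hv.1, hv.2]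
    · fun_prop
  · rw [jFrac]
    congr 1
    rcases ht.eq_or_lt with rfl | ht
    · simp [zero_rpow hb.ne']
    have h := intervalIntegral.smul_integral_comp_mul_left
      (fun s => (t - s) ^ (b - 1) • g s) t (a := 0) (b := 1)
    rw [mul_zero, mul_one] at h
    rw [← h, ← intervalIntegral.integral_smul, ← intervalIntegral.integral_smul]
    refine integral_congr fun v hv => ?_
    rw [Set.uIcc_of_le zero_le_one] at hv
    rw [show t - t * v = t * (1 - v) by ring, mul_rpow ht.le (by linarith [hv.2]), smul_smul,
      smul_smul, ← mul_assoc, mul_comm t, ← rpow_add_one ht.ne', sub_add_cancel]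

lemma summable_opML_coeff_mul_pow {α β T : ℝ} (hα : 1 ≤ α) (hβ : 1 ≤ β) (hT : 0 ≤ T) (M : ℝ) (hM : 0 ≤ M) :
    Summable fun n : ℕ => T ^ ((n : ℝ) * α) / Real.Gamma (β + n * α) * M ^ n := by
  have hs := (summable_nat_add_iff 1).2 (Real.summable_pow_div_factorial (T ^ α * M))
  refine (summable_nat_add_iff 1).1 (hs.of_nonneg_of_le (fun n => ?_) fun n => ?_)
  · have := Real.Gamma_pos_of_pos (by positivity : 0 < β + (n + 1 : ℕ) * α)
    positivity
  · have hle : ((n + 1 : ℕ) : ℝ) ≤ (n + 1 : ℕ) * α := le_mul_of_one_le_right (by positivity) hα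
    have hΓ : ((n + 1).factorial : ℝ) ≤ Real.Gamma (β + (n + 1 : ℕ) * α) := by
      rw [← Real.Gamma_nat_eq_factorial]
      push_cast at hle ⊢
      have h0 : (0:ℝ) ≤ n := n.cast_nonneg
      exact Real.Gamma_strictMonoOn_Ici.monotoneOn (Set.mem_Ici.2 (by linarith))
        (Set.mem_Ici.2 (by linarith)) (by linarith)
    rw [mul_comm (((n + 1 : ℕ) : ℝ)) α, rpow_mul hT, rpow_natCast, mul_comm α, div_mul_eq_mul_div,
      ← mul_pow]
    gcongr

lemma norm_pow_le_norm_add_one_pow (A : E →L[ℝ] E) (n : ℕ) : ‖A ^ n‖ ≤ (‖A‖ + 1) ^ n := by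
  rcases n.eq_zero_or_pos with rfl | hn
  · rw [pow_zero, pow_zero]
    exact ContinuousLinearMap.norm_id_le
  · exact (norm_pow_le' A hn).trans (by gcongr; linarith)

lemma hasSum_opML_apply [CompleteSpace E] {α β t : ℝ} (hα : 1 ≤ α) (hβ : 1 ≤ β) (ht : 0 ≤ t)
    (A : E →L[ℝ] E) (x : E) :
    HasSum (fun n : ℕ => (t ^ ((n : ℝ) * α) / Real.Gamma (β + n * α)) • (A ^ n) x)
      (opML α β A t x) := by
  have hs : Summable fun n : ℕ => (t ^ ((n : ℝ) * α) / Real.Gamma (β + n * α)) • A ^ n := by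
    refine ((summable_opML_coeff_mul_pow hα hβ ht (‖A‖ + 1) (by positivity)).of_norm_bounded fun n => ?_)
    have := Real.Gamma_pos_of_pos (by positivity : 0 < β + n * α)
    rw [norm_smul, Real.norm_of_nonneg (by positivity)]
    gcongr
    exact norm_pow_le_norm_add_one_pow A n
  exact hs.hasSum.mapL (ContinuousLinearMap.apply ℝ E x)

/-- Convolving with `s ↦ s ^ (β - 1) • opML α β A s` is a power series in `A` whose coefficients are
Riemann–Liouville integrals. -/
lemma hasSum_pow_apply_jFrac [CompleteSpace E] {α β t : ℝ} (hα : 1 ≤ α) (hβ : 1 ≤ β) (ht : 0 ≤ t)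
    (A : E →L[ℝ] E) {g : ℝ → E} (hg : Continuous g) :
    HasSum (fun n : ℕ => (A ^ n) (jFrac (β + n * α) g t))
      (∫ τ in (0:ℝ)..t, (t - τ) ^ (β - 1) • opML α β A (t - τ) (g τ)) := by
  obtain ⟨C, hC⟩ := (isCompact_Icc (a := 0) (b := t)).exists_bound_of_continuousOn hg.continuousOn
  have hC0 : 0 ≤ C := (norm_nonneg _).trans (hC 0 ⟨le_rfl, ht⟩)
  have hpos : ∀ n : ℕ, 0 < β + n * α := fun n => by positivity
  have hint : ∀ n : ℕ, IntervalIntegrable (fun τ =>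
      (1 / Real.Gamma (β + n * α)) • (t - τ) ^ (β + n * α - 1) • g τ) volume 0 t :=
    fun n => (intervalIntegrable_sub_rpow_smul (hpos n) hg).smul _
  have key : HasSum (fun n : ℕ => ∫ τ in (0:ℝ)..t,
      (A ^ n) ((1 / Real.Gamma (β + n * α)) • (t - τ) ^ (β + n * α - 1) • g τ))
      (∫ τ in (0:ℝ)..t, (t - τ) ^ (β - 1) • opML α β A (t - τ) (g τ)) := by
    have hterm : ∀ τ ∈ Set.uIoc 0 t, ∀ n : ℕ,
        (A ^ n) ((1 / Real.Gamma (β + n * α)) • (t - τ) ^ (β + n * α - 1) • g τ)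
        = (t - τ) ^ (β - 1) • ((t - τ) ^ ((n : ℝ) * α) / Real.Gamma (β + n * α)) •
          (A ^ n) (g τ) := by
      intro τ hτ n
      rw [Set.uIoc_of_le ht] at hτ
      rw [show β + n * α - 1 = (β - 1) + n * α by ring,
        rpow_add_of_nonneg (by linarith [hτ.2]) (by linarith) (by positivity), map_smul, map_smul,
        smul_smul, smul_smul]
      congr 1
      ring
    have hsum : Summable fun n : ℕ => t ^ (β - 1) *
        (t ^ ((n : ℝ) * α) / Real.Gamma (β + n * α) * (‖A‖ + 1) ^ n * C) :=
      ((summable_opML_coeff_mul_pow hα hβ ht _ (by positivity)).mul_right C).mul_left _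
    refine intervalIntegral.hasSum_integral_of_dominated_convergence
      (fun n _ => t ^ (β - 1) * (t ^ ((n : ℝ) * α) / Real.Gamma (β + n * α) * (‖A‖ + 1) ^ n * C))
      (fun n => ?_) (fun n => Filter.Eventually.of_forall fun τ hτ => ?_)
      (Filter.Eventually.of_forall fun τ _ => hsum) intervalIntegrable_const
      (Filter.Eventually.of_forall fun τ hτ => ?_)
    · exact (A ^ n).continuous.comp_aestronglyMeasurable
        (intervalIntegrable_iff.1 (hint n)).aestronglyMeasurable
    · rw [hterm τ hτ]
      rw [Set.uIoc_of_le ht] at hτ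
      have h0 : 0 ≤ t - τ := by linarith [hτ.2]
      have h1 : t - τ ≤ t := by linarith [hτ.1]
      have hΓ := Real.Gamma_pos_of_pos (hpos n)
      rw [norm_smul, norm_smul, Real.norm_of_nonneg (rpow_nonneg h0 _),
        Real.norm_of_nonneg (div_nonneg (rpow_nonneg h0 _) hΓ.le), mul_assoc (_ / _)]
      have h2 : ‖(A ^ n) (g τ)‖ ≤ (‖A‖ + 1) ^ n * C :=
        ((A ^ n).le_of_opNorm_le_of_le (norm_pow_le_norm_add_one_pow A n) (hC τ ⟨hτ.1.le, hτ.2⟩))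
      have h3 : (t - τ) ^ (β - 1) ≤ t ^ (β - 1) := rpow_le_rpow h0 h1 (by linarith)
      have h4 : (t - τ) ^ ((n : ℝ) * α) ≤ t ^ ((n : ℝ) * α) := rpow_le_rpow h0 h1 (by positivity)
      gcongr
    · simp only [hterm τ hτ]
      rw [Set.uIoc_of_le ht] at hτ
      exact (hasSum_opML_apply hα hβ (by linarith [hτ.2]) A (g τ)).const_smul _
  refine key.congr_fun fun n => ?_
  rw [(A ^ n).intervalIntegral_comp_comm (hint n), intervalIntegral.integral_smul, jFrac]

lemma jFrac_const [CompleteSpace E] {c s : ℝ} (hc : 0 < c) (x : E) :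
    jFrac c (fun _ => x) s = (s ^ c / Real.Gamma (c + 1)) • x := by
  rw [jFrac, intervalIntegral.integral_smul_const,
    intervalIntegral.integral_comp_sub_left (fun u : ℝ => u ^ (c - 1)) s, sub_self, sub_zero,
    integral_rpow (Or.inl (by linarith)), sub_add_cancel, zero_rpow hc.ne', sub_zero, smul_smul,
    Real.Gamma_add_one hc.ne']
  congr 1
  field_simp

lemma mul_left_pow_apply_one (A : E →L[ℝ] E) (n : ℕ) :
    (ContinuousLinearMap.mul ℝ (E →L[ℝ] E) A ^ n) 1 = A ^ n := by
  induction n with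
  | zero => rfl
  | succ n ih =>
    rw [pow_succ', pow_succ', ← ih]
    rfl

lemma opML_mul_left_apply_one [CompleteSpace E] {α β u : ℝ} (hα : 1 ≤ α) (hβ : 1 ≤ β) (hu : 0 ≤ u)
    (A : E →L[ℝ] E) :
    opML α β (ContinuousLinearMap.mul ℝ (E →L[ℝ] E) A) u 1 = opML α β A u := by
  have h := hasSum_opML_apply hα hβ hu (ContinuousLinearMap.mul ℝ (E →L[ℝ] E) A) 1
  simp only [mul_left_pow_apply_one] at h
  exact h.tsum_eq.symm

lemma integral_opML_one [CompleteSpace E] {α s : ℝ} (hα : 1 ≤ α) (hs : 0 ≤ s) (A : E →L[ℝ] E) :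
    ∫ u in (0:ℝ)..s, opML α 1 A u = s • opML α 2 A s := by
  set L := ContinuousLinearMap.mul ℝ (E →L[ℝ] E) A
  have h1 := hasSum_pow_apply_jFrac hα le_rfl hs L (continuous_const (y := (1 : E →L[ℝ] E)))
  have h2 : ∫ τ in (0:ℝ)..s, (s - τ) ^ ((1:ℝ) - 1) • opML α 1 L (s - τ) 1
      = ∫ u in (0:ℝ)..s, opML α 1 A u := by
    have h := intervalIntegral.integral_comp_sub_left (fun u => opML α 1 A u) s (a := 0) (b := s)
    rw [sub_self, sub_zero] at h
    rw [← h]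
    refine intervalIntegral.integral_congr fun τ hτ => ?_
    rw [Set.uIcc_of_le hs] at hτ
    simp only [sub_self, rpow_zero, one_smul]
    exact opML_mul_left_apply_one hα le_rfl (by linarith [hτ.2]) A
  rw [h2] at h1
  have h3 := (hasSum_opML_apply hα one_le_two hs L 1).const_smul s
  rw [opML_mul_left_apply_one hα one_le_two hs A] at h3
  refine h1.unique (h3.congr_fun fun n => ?_)
  rw [jFrac_const (by positivity), map_smul, smul_smul,
    show (1 : ℝ) + n * α + 1 = 2 + n * α by ring, rpow_add_of_nonneg hs zero_le_one (by positivity),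
    rpow_one, mul_div_assoc]

lemma jFrac_one (g : ℝ → E) (t : ℝ) : jFrac 1 g t = ∫ τ in (0:ℝ)..t, g τ := by
  simp [jFrac]

lemma jFrac_one_deriv [CompleteSpace E] {f : ℝ → E} (hf : ContDiff ℝ 1 f) (hf0 : f 0 = 0) (t : ℝ) :
    jFrac 1 (deriv f) t = f t := by
  rw [jFrac_one, intervalIntegral.integral_deriv_eq_sub
    (fun x _ => hf.differentiable one_ne_zero x)
    ((hf.continuous_deriv le_rfl).intervalIntegrable _ _), hf0, sub_zero]

end

/-- For `1 < α < 2` one has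
`∫_0^t (J S_α)(t-τ) ^{RL}D^{2-α} f(τ) dτ = ∫_0^t (t-τ)^{α-1} E_{α,α}((t-τ)^α A) f(τ) dτ`,
where `J S_α(s) = ∫_0^s S_α(u) du` and `^{RL}D^{2-α} f = (d/dτ) J^{α-1} f`. -/
theorem integral_rep {E : Type*} [NormedAddCommGroup E] [NormedSpace ℝ E] [CompleteSpace E]
    (α : ℝ) (hα₁ : 1 < α) (hα₂ : α < 2) (A : E →L[ℝ] E)
    (f : ℝ → E) (hf : ContDiff ℝ 1 f) (hf0 : f 0 = 0) :
    ∀ t ≥ (0 : ℝ),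
      (∫ τ in (0:ℝ)..t, (∫ u in (0:ℝ)..(t - τ), opML α 1 A u) (deriv (jFrac (α - 1) f) τ))
        = ∫ τ in (0:ℝ)..t, (t - τ) ^ (α - 1) • opML α α A (t - τ) (f τ) := by
  intro t ht
  have hf' : Continuous (deriv f) := hf.continuous_deriv le_rfl
  have hJf : jFrac 1 (deriv f) = f := funext (jFrac_one_deriv hf hf0)
  have hα : 0 < α - 1 := by linarith
  obtain ⟨G, hG, hGeq⟩ := exists_continuous_eq_jFrac hα hf'
  have hprim : ∀ τ, 0 ≤ τ → jFrac (α - 1) f τ = ∫ s in (0:ℝ)..τ, G s := by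
    intro τ hτ
    rw [← jFrac_one, ← jFrac_congr hτ fun s hs => hGeq s hs.1, jFrac_jFrac one_pos hα hτ hf',
      add_comm 1, ← jFrac_jFrac hα one_pos hτ hf', hJf]
  have hderiv : ∀ τ, 0 < τ → deriv (jFrac (α - 1) f) τ = G τ := by
    intro τ hτ
    have hev : jFrac (α - 1) f =ᶠ[nhds τ] fun x => ∫ s in (0:ℝ)..x, G s := by
      filter_upwards [lt_mem_nhds hτ] with x hx using hprim x hx.le
    rw [hev.deriv_eq, hG.deriv_integral G 0 τ]
  have hL : (∫ τ in (0:ℝ)..t,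
        (∫ u in (0:ℝ)..(t - τ), opML α 1 A u) (deriv (jFrac (α - 1) f) τ))
      = ∫ τ in (0:ℝ)..t, (t - τ) ^ ((2:ℝ) - 1) • opML α 2 A (t - τ) (G τ) := by
    refine intervalIntegral.integral_congr_ae (Filter.Eventually.of_forall fun τ hτ => ?_)
    rw [Set.uIoc_of_le ht] at hτ
    rw [hderiv τ hτ.1, integral_opML_one hα₁.le (by linarith [hτ.2]) A,
      show (2:ℝ) - 1 = 1 by norm_num, rpow_one]
    rfl
  rw [hL]
  refine (hasSum_pow_apply_jFrac hα₁.le one_le_two ht A hG).unique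
    ((hasSum_pow_apply_jFrac hα₁.le hα₁.le ht A hf.continuous).congr_fun fun n => ?_)
  have h2 : 0 < 2 + n * α := by positivity
  have h3 : 0 < α + n * α := by positivity
  rw [← jFrac_congr ht fun s hs => hGeq s hs.1, jFrac_jFrac h2 hα ht hf']
  nth_rewrite 2 [← hJf]
  rw [jFrac_jFrac h3 one_pos ht hf', show 2 + n * α + (α - 1) = α + n * α + 1 by ring]
end

section
/- Let 1 < α < 2, A a bounded operator on a Banach space E, and f : [0,∞) → E continuously differentiable. Then d²/dt² ∫_0^t (t-τ)^{α-1} E_{α,α}((t-τ)^α A) f(τ) dτ = J_t^{α-1} f'(t) + f(0) t^{α-2}/Γ(α-1) + A ∫_0^t (t-τ)^{2α-3} E_{α,2α-2}((t-τ)^α A) f(τ) dτ for t > 0. -/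
open Real MeasureTheory intervalIntegral

open Set Filter Topology

section Duhamel

variable {E : Type*} [NormedAddCommGroup E] [NormedSpace ℝ E]

lemma intervalIntegrable_smul_clm_apply {w : ℝ → ℝ} {M : ℝ → E →L[ℝ] E} {g : ℝ → E} {a b : ℝ}
    (ha : 0 ≤ a) (hb : 0 ≤ b) (hw : IntervalIntegrable w volume a b)
    (hM : ContinuousOn M (Ici 0)) (hg : Continuous g) :
    IntervalIntegrable (fun s => w s • M s (g s)) volume a b := by
  refine hw.smul_continuousOn (f := w) (g := fun s => M s (g s)) ?_
  refine (hM.mono ?_).clm_apply hg.continuousOn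
  intro x hx
  exact (le_min ha hb).trans hx.1

/-- Differentiation of a convolution with a weakly singular operator kernel. -/
lemma hasDerivAt_convolution {w : ℝ → ℝ} {M : ℝ → E →L[ℝ] E} {f : ℝ → E} [CompleteSpace E]
    (hw : ∀ a b, IntervalIntegrable w volume a b) (hwc : ContinuousOn w (Ioi 0))
    (hM : ContinuousOn M (Ici 0)) (hf : ContDiff ℝ 1 f) {t : ℝ} (ht : 0 < t) :
    HasDerivAt (fun x => ∫ s in (0:ℝ)..x, w s • M s (f (x - s)))
      (w t • M t (f 0) + ∫ s in (0:ℝ)..t, w s • M s (deriv f (t - s))) t := by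
  set T := t + 1 with hT
  have hT0 : 0 ≤ T := by linarith
  have hfd : Differentiable ℝ f := hf.differentiable one_ne_zero
  have hfc' : Continuous (deriv f) := hf.continuous_deriv le_rfl
  set g : ℝ → E := fun y => f (max y 0) - f 0 with hg
  have hgc : Continuous g := by
    have := hf.continuous
    fun_prop
  obtain ⟨B, hB⟩ := isCompact_Icc.exists_bound_of_continuousOn
    (hM.mono (Icc_subset_Ici_self : Icc 0 T ⊆ Ici 0))
  obtain ⟨C, hC⟩ := isCompact_Icc.exists_bound_of_continuousOn
    (hfc'.continuousOn (s := Icc 0 T))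
  have h0T : (0:ℝ) ∈ Icc 0 T := ⟨le_rfl, hT0⟩
  have hB0 : 0 ≤ B := (norm_nonneg _).trans (hB 0 h0T)
  have hC0 : 0 ≤ C := (norm_nonneg _).trans (hC 0 h0T)
  have hLip : ∀ x < T, ∀ y < T, ‖g x - g y‖ ≤ C * ‖x - y‖ := by
    intro x hx y hy
    have h1 : ‖f (max x 0) - f (max y 0)‖ ≤ C * ‖max x 0 - max y 0‖ :=
      (convex_Icc (0:ℝ) T).norm_image_sub_le_of_norm_deriv_le
        (fun z _ => hfd z) hC ⟨le_max_right _ _, max_le hy.le hT0⟩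
        ⟨le_max_right _ _, max_le hx.le hT0⟩
    have h2 : ‖max x 0 - max y 0‖ ≤ ‖x - y‖ := by
      simpa using abs_max_sub_max_le_abs x y 0
    calc ‖g x - g y‖ = ‖f (max x 0) - f (max y 0)‖ := by simp [hg]
      _ ≤ _ := h1
      _ ≤ _ := by gcongr
  have hFint : ∀ x a b : ℝ, 0 ≤ a → 0 ≤ b →
      IntervalIntegrable (fun s => w s • M s (g (x - s))) volume a b := fun x a b ha hb =>
    intervalIntegrable_smul_clm_apply ha hb (hw a b) hM (by fun_prop)
  have hDint : IntervalIntegrable (fun s => w s • M s (deriv f (t - s))) volume 0 T :=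
    intervalIntegrable_smul_clm_apply le_rfl hT0 (hw _ _) hM (by fun_prop)
  set F' : ℝ → E := (Iio t).indicator (fun s => w s • M s (deriv f (t - s))) with hF'
  have hmain : HasDerivAt (fun x => ∫ s in (0:ℝ)..T, w s • M s (g (x - s)))
      (∫ s in (0:ℝ)..T, F' s) t := by
    refine (hasDerivAt_integral_of_dominated_loc_of_lip
      (F := fun x s => w s • M s (g (x - s))) (s := Ioo (t - 1) T)
      (bound := fun s => w s * (B * C))
      (Ioo_mem_nhds (by linarith) (by linarith)) ?_ (hFint t 0 T le_rfl hT0) ?_ ?_ ?_ ?_).2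
    · exact .of_forall fun x => (hFint x 0 T le_rfl hT0).aestronglyMeasurable_restrict_uIoc
    · exact hDint.aestronglyMeasurable_restrict_uIoc.indicator measurableSet_Iio
    · refine .of_forall fun s hs => LipschitzOnWith.of_dist_le_mul fun x hx y hy => ?_
      rw [uIoc_of_le hT0] at hs
      rw [dist_eq_norm, dist_eq_norm, ← smul_sub, ← map_sub, norm_smul, Real.coe_nnabs, abs_mul,
        abs_of_nonneg (mul_nonneg hB0 hC0), Real.norm_eq_abs, mul_assoc]
      gcongr
      refine ((M s).le_opNorm _).trans ?_
      rw [mul_assoc]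
      gcongr
      · exact hB s ⟨hs.1.le, hs.2⟩
      · simpa using hLip (x - s) (by linarith [hx.2, hs.1]) (y - s) (by linarith [hy.2, hs.1])
    · exact (hw 0 T).mul_const _
    · have hne : ∀ᵐ s : ℝ ∂volume, s ≠ t := by
        simp [ae_iff, measure_singleton]
      filter_upwards [hne] with s hs _
      have hmap : ∀ v : E, HasDerivAt (fun x => g (x - s)) v t →
          HasDerivAt (fun x => w s • M s (g (x - s))) (w s • M s v) t := fun v hv =>
        ((M s).hasFDerivAt.comp_hasDerivAt t hv).const_smul (w s)
      rcases lt_or_gt_of_ne hs with h | h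
      · rw [hF', indicator_of_mem (show s ∈ Iio t from h)]
        apply hmap
        have h1 : HasDerivAt (fun x => f (x - s) - f 0) (deriv f (t - s)) t :=
          ((hfd (t - s)).hasDerivAt.comp_sub_const t s).sub_const _
        refine h1.congr_of_eventuallyEq ?_
        filter_upwards [Ioi_mem_nhds h] with x hx
        simp only [hg]
        rw [max_eq_left (sub_nonneg.2 (le_of_lt hx))]
      · rw [hF', indicator_of_notMem (by simpa using h.le)]
        have := hmap 0 ?_
        · simpa using this
        refine (hasDerivAt_const t (0:E)).congr_of_eventuallyEq ?_
        filter_upwards [Iio_mem_nhds h] with x hx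
        simp only [hg]
        rw [max_eq_right (sub_nonpos.2 (le_of_lt hx)), sub_self]
  have hF'eq : ∫ s in (0:ℝ)..T, F' s = ∫ s in (0:ℝ)..t, w s • M s (deriv f (t - s)) := by
    rw [integral_of_le hT0, integral_of_le ht.le, hF', MeasureTheory.integral_indicator measurableSet_Iio,
      Measure.restrict_restrict measurableSet_Iio, ← restrict_Ioo_eq_restrict_Ioc (b := t)]
    congr 2
    ext x
    simp only [mem_inter_iff, mem_Iio, mem_Ioc, mem_Ioo]
    constructor
    · rintro ⟨h1, h2, -⟩; exact ⟨h2, h1⟩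
    · rintro ⟨h1, h2⟩; exact ⟨h2, h1, by linarith⟩
  have hconst_int : ∀ b, 0 ≤ b → IntervalIntegrable (fun s => w s • M s (f 0)) volume 0 b :=
    fun b hb => intervalIntegrable_smul_clm_apply le_rfl hb (hw _ _) hM continuous_const
  have hcont : ContinuousOn (fun s => w s • M s (f 0)) (Ioi 0) :=
    hwc.smul ((hM.mono Ioi_subset_Ici_self).clm_apply continuousOn_const)
  have hconst : HasDerivAt (fun x => ∫ s in (0:ℝ)..x, w s • M s (f 0)) (w t • M t (f 0)) t :=
    integral_hasDerivAt_right (hconst_int t ht.le)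
      (hcont.stronglyMeasurableAtFilter isOpen_Ioi t ht) (hcont.continuousAt (Ioi_mem_nhds ht))
  rw [← hF'eq]
  refine (hconst.add hmain).congr_of_eventuallyEq ?_
  filter_upwards [Ioo_mem_nhds ht (show t < T by linarith)] with x hx
  have hz : ∫ s in x..T, w s • M s (g (x - s)) = 0 := by
    refine (integral_congr (g := fun _ => (0:E)) fun s hs => ?_).trans integral_zero
    rw [uIcc_of_le hx.2.le] at hs
    simp only [hg]
    rw [max_eq_right (sub_nonpos.2 hs.1)]
    simp
  rw [Pi.add_apply, ← integral_add_adjacent_intervals (hFint x 0 x le_rfl hx.1.le)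
    (hFint x x T hx.1.le hT0), hz, add_zero,
    ← integral_add (hconst_int x hx.1.le) (hFint x 0 x le_rfl hx.1.le)]
  refine integral_congr fun s hs => ?_
  rw [uIcc_of_le hx.1.le] at hs
  simp only [hg]
  rw [max_eq_left (sub_nonneg.2 hs.2), ← smul_add, ← map_add, add_sub_cancel]

/-- The Mittag-Leffler kernel `s ^ (β - 1) E_{α,β}(s ^ α A)`. -/
noncomputable def mlKernel (α β : ℝ) (A : E →L[ℝ] E) (s : ℝ) : E →L[ℝ] E :=
  s ^ (β - 1) • opML α β A s

lemma summable_norm_opML_majorant {α β : ℝ} (hα : 1 ≤ α) (hβ : 0 < β) (A : E →L[ℝ] E) {R : ℝ}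
    (hR : 0 ≤ R) :
    Summable fun n : ℕ => R ^ ((n : ℝ) * α) / Gamma (β + n * α) * ‖A ^ n‖ := by
  rw [← summable_nat_add_iff 2]
  set y := R ^ α * ‖A‖ with hy
  have hy0 : 0 ≤ y := by positivity
  have hG : ∀ n : ℕ, (0:ℝ) < Gamma (β + n * α) := fun n => Gamma_pos_of_pos (by positivity)
  refine Summable.of_nonneg_of_le (fun n => ?_) (fun n => ?_)
    ((Real.summable_pow_div_factorial y).mul_left (y ^ 2))
  · have := hG (n + 2)
    positivity
  · have h1 : (n.factorial : ℝ) ≤ Gamma (β + (n + 2 : ℕ) * α) := by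
      have h2 : ((n + 1).factorial : ℝ) ≤ Gamma (β + (n + 2 : ℕ) * α) := by
        rw [← Real.Gamma_nat_eq_factorial]
        have h3 : ((n + 2 : ℕ) : ℝ) ≤ (n + 2 : ℕ) * α := le_mul_of_one_le_right (by positivity) hα
        push_cast at h3 ⊢
        have hn : (0:ℝ) ≤ n := by positivity
        refine Gamma_strictMonoOn_Ici.monotoneOn ?_ ?_ ?_
        · simp only [mem_Ici]; linarith
        · simp only [mem_Ici]; linarith
        · linarith
      exact le_trans (by exact_mod_cast Nat.factorial_le (Nat.le_succ n)) h2
    have h4 : R ^ (((n + 2 : ℕ) : ℝ) * α) = (R ^ α) ^ (n + 2) := by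
      rw [mul_comm, rpow_mul hR, rpow_natCast]
    calc R ^ (((n + 2 : ℕ) : ℝ) * α) / Gamma (β + (n + 2 : ℕ) * α) * ‖A ^ (n + 2)‖
        ≤ (R ^ α) ^ (n + 2) / n.factorial * ‖A‖ ^ (n + 2) := by
          rw [h4]
          gcongr
          exact norm_pow_le' A (by omega)
      _ = y ^ 2 * (y ^ n / n.factorial) := by rw [hy]; ring

lemma norm_opML_term_le {α β : ℝ} (hα : 1 ≤ α) (hβ : 0 < β) (A : E →L[ℝ] E) {s R : ℝ}
    (hs : 0 ≤ s) (hsR : s ≤ R) (n : ℕ) :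
    ‖(s ^ ((n : ℝ) * α) / Gamma (β + n * α)) • A ^ n‖ ≤
      R ^ ((n : ℝ) * α) / Gamma (β + n * α) * ‖A ^ n‖ := by
  have hG : (0:ℝ) < Gamma (β + n * α) := Gamma_pos_of_pos (by positivity)
  rw [norm_smul, Real.norm_of_nonneg (by positivity)]
  gcongr

variable [CompleteSpace E]

lemma continuousOn_opML {α β : ℝ} (hα : 1 ≤ α) (hβ : 0 < β) (A : E →L[ℝ] E) :
    ContinuousOn (opML α β A) (Ici 0) := by
  have key : ∀ R : ℝ, 0 ≤ R → ContinuousOn (opML α β A) (Icc 0 R) := fun R hR =>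
    continuousOn_tsum
      (fun n => (((Real.continuous_rpow_const (by positivity)).div_const _).smul
        continuous_const).continuousOn)
      (summable_norm_opML_majorant hα hβ A hR)
      fun n s hs => norm_opML_term_le hα hβ A hs.1 hs.2 n
  intro x hx
  have hx0 : (0:ℝ) ≤ x := hx
  refine (key (x + 1) (by linarith) x ⟨hx, by linarith⟩).mono_of_mem_nhdsWithin ?_
  rw [← Ici_inter_Iic]
  exact inter_mem_nhdsWithin _ (Iic_mem_nhds (by linarith))

lemma summable_opML {α β : ℝ} (hα : 1 ≤ α) (hβ : 0 < β) (A : E →L[ℝ] E) {s : ℝ} (hs : 0 ≤ s) :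
    Summable fun n : ℕ => (s ^ ((n : ℝ) * α) / Gamma (β + n * α)) • A ^ n :=
  .of_norm_bounded (summable_norm_opML_majorant hα hβ A hs)
    fun n => norm_opML_term_le hα hβ A hs le_rfl n

lemma mlKernel_eq_tsum {α β : ℝ} (hα : 1 ≤ α) (hβ : 0 < β) (A : E →L[ℝ] E) {s : ℝ} (hs : 0 < s) :
    mlKernel α β A s =
      ∑' n : ℕ, (s ^ (β - 1 + (n : ℝ) * α) / Gamma (β + n * α)) • A ^ n := by
  rw [mlKernel, opML, ← (summable_opML hα hβ A hs.le).tsum_const_smul]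
  refine tsum_congr fun n => ?_
  rw [smul_smul, rpow_add hs, mul_div_assoc]

lemma summable_mlKernel {α β : ℝ} (hα : 1 ≤ α) (hβ : 0 < β) (A : E →L[ℝ] E) {s : ℝ}
    (hs : 0 < s) :
    Summable fun n : ℕ => (s ^ (β - 1 + (n : ℝ) * α) / Gamma (β + n * α)) • A ^ n := by
  refine ((summable_opML hα hβ A hs.le).const_smul (s ^ (β - 1))).congr fun n => ?_
  rw [smul_smul, rpow_add hs, mul_div_assoc]

lemma hasDerivAt_mlKernel {α β : ℝ} (hα : 1 ≤ α) (hβ : 0 < β) (A : E →L[ℝ] E) {s : ℝ}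
    (hs : 0 < s) : HasDerivAt (mlKernel α (β + 1) A) (mlKernel α β A s) s := by
  have hβ1 : 0 < β + 1 := by linarith
  obtain ⟨C, hC⟩ := (isCompact_Icc (a := s / 2) (b := 2 * s)).exists_bound_of_continuousOn
    (f := fun x : ℝ => x ^ (β - 1)) fun x hx =>
      (continuousAt_rpow_const x _ (Or.inl (by linarith [hx.1]))).continuousWithinAt
  have hmem : s ∈ Ioo (s / 2) (2 * s) := ⟨by linarith, by linarith⟩
  have hpos : ∀ y ∈ Ioo (s / 2) (2 * s), 0 < y := fun y hy => by linarith [hy.1]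
  have key : HasDerivAt
      (fun z => ∑' n : ℕ, (z ^ (β + 1 - 1 + (n : ℝ) * α) / Gamma (β + 1 + n * α)) • A ^ n)
      (∑' n : ℕ, (s ^ (β - 1 + (n : ℝ) * α) / Gamma (β + n * α)) • A ^ n) s := by
    refine hasDerivAt_tsum_of_isPreconnected
      (g := fun (n : ℕ) z => (z ^ (β + 1 - 1 + (n : ℝ) * α) / Gamma (β + 1 + n * α)) • A ^ n)
      (g' := fun (n : ℕ) z => (z ^ (β - 1 + (n : ℝ) * α) / Gamma (β + n * α)) • A ^ n)
      ((summable_norm_opML_majorant hα hβ A (R := 2 * s) (by linarith)).mul_left C)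
      isOpen_Ioo isPreconnected_Ioo (fun n y hy => ?_) (fun n y hy => ?_) hmem
      (summable_mlKernel hα hβ1 A hs) hmem
    · have hy0 := hpos y hy
      have hne : β + n * α ≠ 0 := by positivity
      have hG : Gamma (β + n * α) ≠ 0 := (Gamma_pos_of_pos (by positivity)).ne'
      have h := (((hasDerivAt_rpow_const (p := β + 1 - 1 + n * α)
        (Or.inl hy0.ne')).div_const (Gamma (β + 1 + n * α))).smul_const (A ^ n))
      convert h using 2
      rw [show β + 1 + n * α = (β + n * α) + 1 by ring, Gamma_add_one hne,
        show β + 1 - 1 + n * α = β + n * α by ring,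
        show β + n * α - 1 = β - 1 + n * α by ring]
      field_simp
    · have hy0 := hpos y hy
      rw [rpow_add hy0, mul_div_assoc, mul_smul, norm_smul]
      exact mul_le_mul (hC y ⟨hy.1.le, hy.2.le⟩)
        (norm_opML_term_le hα hβ A hy0.le hy.2.le n) (norm_nonneg _)
        ((norm_nonneg _).trans (hC y ⟨hy.1.le, hy.2.le⟩))
  rw [mlKernel_eq_tsum hα hβ A hs]
  refine key.congr_of_eventuallyEq ?_
  filter_upwards [Ioi_mem_nhds hs] with x hx
  exact mlKernel_eq_tsum hα hβ1 A hx

lemma mlKernel_eq_add {α β : ℝ} (hα : 1 ≤ α) (hβ : 0 < β) (A : E →L[ℝ] E) {s : ℝ} (hs : 0 < s) :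
    mlKernel α β A s =
      (s ^ (β - 1) / Gamma β) • ContinuousLinearMap.id ℝ E + A * mlKernel α (β + α) A s := by
  rw [mlKernel_eq_tsum hα hβ A hs, mlKernel_eq_tsum hα (by linarith) A hs,
    (summable_mlKernel hα hβ A hs).tsum_eq_zero_add,
    ← (summable_mlKernel hα (by linarith) A hs).tsum_mul_left]
  congr 1
  · simp [ContinuousLinearMap.one_def]
  · refine tsum_congr fun n => ?_
    rw [mul_smul_comm, ← pow_succ']
    congr 3 <;> push_cast <;> ring_nf

lemma mlKernel_intervalIntegrable {α β : ℝ} (hα : 1 ≤ α) (hβ : 0 < β) (A : E →L[ℝ] E)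
    {g : ℝ → E} (hg : Continuous g) {t : ℝ} (ht : 0 ≤ t) :
    IntervalIntegrable (fun s => mlKernel α β A s (g s)) volume 0 t :=
  intervalIntegrable_smul_clm_apply le_rfl ht (intervalIntegrable_rpow' (by linarith))
    (continuousOn_opML hα hβ A) hg

lemma mlKernel_integration_by_parts {α β : ℝ} (hα : 1 ≤ α) (hβ : 0 < β) (A : E →L[ℝ] E)
    {f : ℝ → E} (hf : ContDiff ℝ 1 f) {t : ℝ} (ht : 0 < t) :
    mlKernel α (β + 1) A t (f 0) + ∫ s in (0:ℝ)..t, mlKernel α (β + 1) A s (deriv f (t - s)) =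
      ∫ s in (0:ℝ)..t, mlKernel α β A s (f (t - s)) := by
  have hfc := hf.continuous
  have hfc' : Continuous (deriv f) := hf.continuous_deriv le_rfl
  have hβ1 : 0 < β + 1 := by linarith
  have h1 := mlKernel_intervalIntegrable hα hβ A (g := fun s => f (t - s)) (by fun_prop) ht.le
  have h2 := mlKernel_intervalIntegrable hα hβ1 A (g := fun s => deriv f (t - s))
    (by fun_prop) ht.le
  have hK : ContinuousOn (mlKernel α (β + 1) A) (Icc 0 t) :=
    (Real.continuous_rpow_const (by linarith)).continuousOn.smul
      ((continuousOn_opML hα hβ1 A).mono Icc_subset_Ici_self)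
  have h := integral_eq_sub_of_hasDerivAt_of_le ht.le
    (f := fun s => mlKernel α (β + 1) A s (f (t - s)))
    (hK.clm_apply (by fun_prop)) (fun s hs => ?_) (h1.sub h2)
  · rw [integral_sub h1 h2] at h
    have h0 : mlKernel α (β + 1) A 0 = 0 := by simp [mlKernel, zero_rpow hβ.ne']
    simp only [h0, sub_self, zero_apply, sub_zero] at h
    rw [← h, sub_add_cancel]
  · have hd : HasDerivAt (fun s => f (t - s)) (-deriv f (t - s)) s :=
      ((hf.differentiable one_ne_zero) (t - s)).hasDerivAt.comp_const_sub t s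
    have := (hasDerivAt_mlKernel hα hβ A hs.1).clm_apply hd
    simpa [sub_eq_add_neg] using this

lemma hasDerivAt_mlKernel_convolution {α β : ℝ} (hα : 1 ≤ α) (hβ : 0 < β) (A : E →L[ℝ] E)
    {f : ℝ → E} (hf : ContDiff ℝ 1 f) {t : ℝ} (ht : 0 < t) :
    HasDerivAt (fun x => ∫ s in (0:ℝ)..x, mlKernel α β A s (f (x - s)))
      (mlKernel α β A t (f 0) + ∫ s in (0:ℝ)..t, mlKernel α β A s (deriv f (t - s))) t :=
  hasDerivAt_convolution (fun _ _ => intervalIntegrable_rpow' (by linarith))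
    (fun x hx => (continuousAt_rpow_const x _ (Or.inl (ne_of_gt hx))).continuousWithinAt)
    (continuousOn_opML hα hβ A) hf ht

end Duhamel

/-- Second derivative of the fractional Duhamel term: for `1 < α < 2`, `f ∈ C¹`, `t > 0`,
`d²/dt² ∫_0^t (t-τ)^{α-1} E_{α,α}((t-τ)^α A) f(τ) dτ
 = J^{α-1} f'(t) + f(0) t^{α-2}/Γ(α-1)
   + A ∫_0^t (t-τ)^{2α-3} E_{α,2α-2}((t-τ)^α A) f(τ) dτ`. -/
theorem second_deriv_duhamel {E : Type*} [NormedAddCommGroup E] [NormedSpace ℝ E]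
    [CompleteSpace E]
    (α : ℝ) (hα₁ : 1 < α) (hα₂ : α < 2) (A : E →L[ℝ] E)
    (f : ℝ → E) (hf : ContDiff ℝ 1 f) (t : ℝ) (ht : 0 < t) :
    iteratedDeriv 2 (fun s => ∫ τ in (0:ℝ)..s, (s - τ) ^ (α - 1) • opML α α A (s - τ) (f τ)) t
      = (1 / Real.Gamma (α - 1)) • (∫ τ in (0:ℝ)..t, (t - τ) ^ (α - 2) • deriv f τ)
        + (t ^ (α - 2) / Real.Gamma (α - 1)) • f 0
        + A (∫ τ in (0:ℝ)..t, (t - τ) ^ (2 * α - 3) • opML α (2 * α - 2) A (t - τ) (f τ)) := by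
  have hα : 1 ≤ α := hα₁.le
  have hβ : 0 < α - 1 := by linarith
  have hfc' : Continuous (deriv f) := hf.continuous_deriv le_rfl
  have hu : (fun s => ∫ τ in (0:ℝ)..s, (s - τ) ^ (α - 1) • opML α α A (s - τ) (f τ)) =
      fun x => ∫ s in (0:ℝ)..x, mlKernel α (α - 1 + 1) A s (f (x - s)) := by
    funext x
    have h := integral_comp_sub_left (a := 0) (b := x)
      (fun s => mlKernel α (α - 1 + 1) A s (f (x - s))) x
    simp only [sub_self, sub_zero] at h
    rw [← h]
    simp [mlKernel]
  have hu' : ∀ x, 0 < x → deriv (fun x => ∫ s in (0:ℝ)..x,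
      mlKernel α (α - 1 + 1) A s (f (x - s))) x =
      ∫ s in (0:ℝ)..x, mlKernel α (α - 1) A s (f (x - s)) := fun x hx => by
    rw [(hasDerivAt_mlKernel_convolution hα (by linarith) A hf hx).deriv,
      mlKernel_integration_by_parts hα hβ A hf hx]
  have hev : deriv (fun x => ∫ s in (0:ℝ)..x, mlKernel α (α - 1 + 1) A s (f (x - s))) =ᶠ[𝓝 t]
      fun x => ∫ s in (0:ℝ)..x, mlKernel α (α - 1) A s (f (x - s)) := by
    filter_upwards [Ioi_mem_nhds ht] with x hx using hu' x hx
  rw [hu, iteratedDeriv_succ, iteratedDeriv_one, hev.deriv_eq,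
    (hasDerivAt_mlKernel_convolution hα hβ A hf ht).deriv]
  have hγ : 0 < 2 * α - 2 := by linarith
  have hibp := mlKernel_integration_by_parts hα hγ A hf ht
  have hexp : α - 1 + α = 2 * α - 2 + 1 := by ring
  have hexp' : α - 1 - 1 = α - 2 := by ring
  have hR : ∫ τ in (0:ℝ)..t, (t - τ) ^ (2 * α - 3) • opML α (2 * α - 2) A (t - τ) (f τ) =
      ∫ s in (0:ℝ)..t, mlKernel α (2 * α - 2) A s (f (t - s)) := by
    have h := integral_comp_sub_left (a := 0) (b := t)
      (fun s => mlKernel α (2 * α - 2) A s (f (t - s))) t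
    simp only [sub_self, sub_zero] at h
    rw [← h]
    simp [mlKernel, show 2 * α - 2 - 1 = 2 * α - 3 by ring]
  have hJ : ∫ τ in (0:ℝ)..t, (t - τ) ^ (α - 2) • deriv f τ =
      ∫ s in (0:ℝ)..t, s ^ (α - 2) • deriv f (t - s) := by
    have h := integral_comp_sub_left (a := 0) (b := t)
      (fun s => s ^ (α - 2) • deriv f (t - s)) t
    simp only [sub_self, sub_zero] at h
    rw [← h]
    simp
  have hKint : IntervalIntegrable (fun s => mlKernel α (2 * α - 2 + 1) A s (deriv f (t - s)))
      volume 0 t := mlKernel_intervalIntegrable hα (by linarith) A (by fun_prop) ht.le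
  have hJint : IntervalIntegrable (fun s : ℝ => s ^ (α - 2) • deriv f (t - s)) volume 0 t :=
    (intervalIntegrable_rpow' (by linarith)).smul_continuousOn
      (g := fun s => deriv f (t - s)) (by fun_prop)
  have hsplit : ∫ s in (0:ℝ)..t, mlKernel α (α - 1) A s (deriv f (t - s)) =
      (1 / Gamma (α - 1)) • (∫ s in (0:ℝ)..t, s ^ (α - 2) • deriv f (t - s)) +
        A (∫ s in (0:ℝ)..t, mlKernel α (2 * α - 2 + 1) A s (deriv f (t - s))) := by
    rw [← ContinuousLinearMap.intervalIntegral_comp_comm A hKint, ← intervalIntegral.integral_smul,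
      ← integral_add (f := fun s => (1 / Gamma (α - 1)) • s ^ (α - 2) • deriv f (t - s))
        (hJint.smul _) ⟨A.integrable_comp hKint.1, A.integrable_comp hKint.2⟩]
    refine integral_congr_ae (.of_forall fun s hs => ?_)
    rw [uIoc_of_le ht.le] at hs
    rw [mlKernel_eq_add hα hβ A hs.1, hexp, hexp']
    simp [smul_smul, div_eq_inv_mul]
  rw [hsplit, hJ, hR, ← hibp, mlKernel_eq_add hα hβ A ht, hexp, hexp', map_add]
  simp only [add_apply, smul_apply, ContinuousLinearMap.id_apply, mul_apply_eq_comp]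
  abel
end
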